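/- Let k be a positive integer and t ≥ 4/3 with tk an integer. Define ν := √(t(t−1)) − (t−1), θ₁ := ν(1−ν), θ₂ := 0.5 − θ₁, and θ₃ := ν²/(2(t−1)). Let 𝒢 be a partition of {1,…,n} into g disjoint nonempty subsets, let μ > 0 with μ√g < 1−μ, set γ := μ√g/(1−μ) and ρ̄ := (1−γ)/(1+γ). Suppose A ∈ ℝ^{m×n} satisfies the RIP of order tk with constant δ := δ_{tk} satisfying δ < ρ̄²θ₁/(θ₃ + ρ̄²θ₂). Then there exist constants C₀ and C₁ (depending on A, k, t, μ, g but not on x or η) such that whenever y = Ax + η with ‖η‖₂ ≤ ε and x̂ is a minimizer of ‖z‖_{SGL,μ} over {z : ‖Az − y‖₂ ≤ ε}, one has ‖x̂ − x‖₁ ≤ C₀·σ_k(x, ‖·‖₁) + C₁·ε. -/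

import Mathlib

/-- The ℓ¹-norm of a vector in ℝⁿ. -/
noncomputable def l1 {n : ℕ} (x : Fin n → ℝ) : ℝ := ∑ i, |x i|

/-- The ℓ²-norm of a vector in ℝⁿ. -/
noncomputable def l2 {n : ℕ} (x : Fin n → ℝ) : ℝ := Real.sqrt (∑ i, (x i) ^ 2)

/-- The ℓᵖ-norm of a vector in ℝⁿ. -/
noncomputable def lpNorm {n : ℕ} (p : ℝ) (x : Fin n → ℝ) : ℝ := (∑ i, |x i| ^ p) ^ (1 / p)

/-- A vector is `k`-sparse if it has at most `k` nonzero components. -/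
def IsSparse {n : ℕ} (k : ℕ) (x : Fin n → ℝ) : Prop :=
  (Finset.univ.filter (fun i => x i ≠ 0)).card ≤ k

/-- The `k`-sparsity index of `x` with respect to the ℓ¹-norm. -/
noncomputable def sigma1 {n : ℕ} (k : ℕ) (x : Fin n → ℝ) : ℝ :=
  sInf ((fun z => l1 (x - z)) '' {z | IsSparse k z})

/-- The `k`-sparsity index of `x` with respect to the ℓ²-norm. -/
noncomputable def sigma2 {n : ℕ} (k : ℕ) (x : Fin n → ℝ) : ℝ :=
  sInf ((fun z => l2 (x - z)) '' {z | IsSparse k z})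

/-- The vector agreeing with `x` on `S` and zero elsewhere. -/
def proj {n : ℕ} (S : Finset (Fin n)) (x : Fin n → ℝ) : Fin n → ℝ :=
  fun i => if i ∈ S then x i else 0

/-- `G` is a partition of `{1,…,n}` into `g` disjoint nonempty subsets. -/
def IsPartition {n g : ℕ} (G : Fin g → Finset (Fin n)) : Prop :=
  (∀ i, (G i).Nonempty) ∧ (∀ i j, i ≠ j → Disjoint (G i) (G j)) ∧
    (∀ x : Fin n, ∃ i, x ∈ G i)

/-- The Sparse Group LASSO norm associated to the partition `G` with parameter `μ`. -/
noncomputable def sglNorm {n g : ℕ} (G : Fin g → Finset (Fin n)) (μ : ℝ) (z : Fin n → ℝ) : ℝ :=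
  ∑ i, ((1 - μ) * l1 (proj (G i) z) + μ * l2 (proj (G i) z))

/-- `A` satisfies the Restricted Isometry Property of order `k` with constant `δ`. -/
def RIP {m n : ℕ} (A : Matrix (Fin m) (Fin n) ℝ) (k : ℕ) (δ : ℝ) : Prop :=
  ∀ u : Fin n → ℝ, IsSparse k u →
    (1 - δ) * (l2 u) ^ 2 ≤ (l2 (A.mulVec u)) ^ 2 ∧
      (l2 (A.mulVec u)) ^ 2 ≤ (1 + δ) * (l2 u) ^ 2

/-- `A` satisfies the ℓ₂ robust null space property of order `k` with constants `ρ`, `τ`. -/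
def RNSP {m n : ℕ} (A : Matrix (Fin m) (Fin n) ℝ) (k : ℕ) (ρ τ : ℝ) : Prop :=
  ∀ h : Fin n → ℝ, ∀ S : Finset (Fin n), S.card ≤ k →
    l2 (proj S h) ≤ (ρ / Real.sqrt k) * l1 (proj Sᶜ h) +
      (τ / Real.sqrt k) * l2 (A.mulVec h)

/-!
Split the error `h = x̂ - x` into a sparse head `v` and a tail `w`. By the identity
`‖A(v + νu)‖² / 4 - ‖A((1/2 - ν)v - (ν/2)u)‖² = ν(1 - ν)⟨Av, A(v + u)⟩`, the RIP controls `‖v‖²` in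
terms of `⟨Av, A(v + u)⟩` for every sparse `u` orthogonal to `v`. The tail is not sparse, but it
lies in a polytope `{‖w‖_∞ ≤ β, ‖w‖₁ ≤ rβ}` whose extreme points are `r`-sparse, and a linear
functional is minimised at an extreme point: some `r`-sparse `u` has `⟨Av, Au⟩ ≤ ⟨Av, Aw⟩`, so
`⟨Av, A(v + u)⟩ ≤ ⟨Av, Ah⟩`. This yields the `ℓ₂` robust null space property.

The group part `Σ ‖z_{G_i}‖₂` of the SGL norm is `1`-Lipschitz for `ℓ₁`, so a vector `z` with
`‖z‖_{SGL,μ} ≤ ‖x‖_{SGL,μ}` satisfies `(1 - 2μ)‖(z - x)_{Sᶜ}‖₁ ≤ ‖(z - x)_S‖₁ + 2‖x_{Sᶜ}‖₁`, and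
`1 - 2μ ≥ ρ̄`. Together with the null space property this bounds the error.
-/

open Finset Matrix

section Rounding

variable {ι α 𝕜 : Type*}

lemma exists_subset_card_le_threshold [LinearOrder α] [Zero α] (I : Finset ι) (c : ι → α) (s : ℕ) :
    ∃ T ⊆ I, ∃ θ : α, 0 ≤ θ ∧ #T ≤ s ∧ (∀ i ∈ T, θ ≤ c i) ∧ (∀ i ∈ I, i ∉ T → c i ≤ θ) ∧
      (θ = 0 ∨ #T = s) := by
  classical
  induction s with
  | zero =>
    obtain ⟨θ, hθ⟩ := (insert 0 (I.image c)).exists_le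
    rw [forall_mem_insert, forall_mem_image] at hθ
    exact ⟨∅, empty_subset I, θ, hθ.1, by simp, by simp, fun i hi _ => hθ.2 hi, by simp⟩
  | succ s ih =>
    obtain ⟨T, hTI, θ, hθ, hTs, hTle, hleT, hθs⟩ := ih
    by_cases hrest : ∀ i ∈ I, i ∉ T → c i ≤ 0
    · exact ⟨T, hTI, 0, le_rfl, by lia, fun i hi => hθ.trans (hTle i hi), hrest, .inl rfl⟩
    push Not at hrest
    obtain ⟨i₀, hi₀I, hi₀T, hi₀⟩ := hrest
    have hcard : #T = s := hθs.resolve_left (hi₀.trans_le (hleT i₀ hi₀I hi₀T)).ne'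
    obtain ⟨j, hj, hjmax⟩ := exists_max_image (I \ T) c ⟨i₀, mem_sdiff.2 ⟨hi₀I, hi₀T⟩⟩
    obtain ⟨hjI, hjT⟩ := mem_sdiff.1 hj
    have hcard' : #(insert j T) = s + 1 := by rw [card_insert_of_notMem hjT, hcard]
    refine ⟨insert j T, insert_subset hjI hTI, c j,
      hi₀.le.trans (hjmax i₀ (mem_sdiff.2 ⟨hi₀I, hi₀T⟩)), hcard'.le, ?_, ?_, .inr hcard'⟩
    · exact (forall_mem_insert _ _ _).2 ⟨le_rfl, fun i hi => (hleT j hjI hjT).trans (hTle i hi)⟩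
    · intro i hiI hi
      exact hjmax i (mem_sdiff.2 ⟨hiI, fun hiT => hi (mem_insert_of_mem hiT)⟩)

variable [Field 𝕜] [LinearOrder 𝕜] [IsStrictOrderedRing 𝕜]

/-- A linear functional on the polytope `0 ≤ w ≤ 1`, `∑ w ≤ s` is maximised at a `0`-`1` vector,
since the polytope is integral for integral `s`. -/
lemma exists_subset_sum_mul_le_sum (I : Finset ι) (c : ι → 𝕜) {w : ι → 𝕜} {s : ℕ}
    (hw0 : ∀ i ∈ I, 0 ≤ w i) (hw1 : ∀ i ∈ I, w i ≤ 1) (hws : ∑ i ∈ I, w i ≤ s) :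
    ∃ T ⊆ I, #T ≤ s ∧ ∑ i ∈ I, c i * w i ≤ ∑ i ∈ T, c i := by
  classical
  obtain ⟨T, hTI, θ, hθ, hTs, hTle, hleT, hθs⟩ := exists_subset_card_le_threshold I c s
  refine ⟨T, hTI, hTs, ?_⟩
  have hslack : θ * s = #T * θ := by
    rcases hθs with rfl | rfl
    · simp
    · exact mul_comm _ _
  have hin : ∑ i ∈ T, (c i - θ) * w i ≤ ∑ i ∈ T, (c i - θ) := sum_le_sum fun i hi =>
    mul_le_of_le_one_right (sub_nonneg.2 (hTle i hi)) (hw1 i (hTI hi))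
  have hout : ∑ i ∈ I \ T, (c i - θ) * w i ≤ 0 := sum_nonpos fun i hi => by
    obtain ⟨hiI, hiT⟩ := mem_sdiff.1 hi
    exact mul_nonpos_of_nonpos_of_nonneg (sub_nonpos.2 (hleT i hiI hiT)) (hw0 i hiI)
  calc ∑ i ∈ I, c i * w i
      = ∑ i ∈ I \ T, (c i - θ) * w i + ∑ i ∈ T, (c i - θ) * w i + θ * ∑ i ∈ I, w i := by
        rw [sum_sdiff hTI, mul_sum, ← sum_add_distrib]
        exact sum_congr rfl fun i _ => by ring
    _ ≤ 0 + ∑ i ∈ T, (c i - θ) + θ * s := by gcongr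
    _ = ∑ i ∈ T, c i := by
        rw [sum_sub_distrib, sum_const, nsmul_eq_mul, hslack]
        ring

lemma exists_subset_card_add_eq_sum_sdiff_le [DecidableEq ι] (I : Finset ι) {f : ι → 𝕜} {N : ℕ}
    {β : 𝕜} (hf : ∀ i ∈ I, 0 ≤ f i) (hβ : 0 ≤ β) (hI : ∑ i ∈ I, f i ≤ N * β) :
    ∃ H ⊆ I, ∃ r : ℕ, #H + r = N ∧ (∀ i ∈ I \ H, f i ≤ β) ∧ ∑ i ∈ I \ H, f i ≤ r * β := by
  set H := I.filter (β < f ·)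
  have hHI : H ⊆ I := filter_subset _ _
  have hsplit : ∑ i ∈ I \ H, f i + ∑ i ∈ H, f i = ∑ i ∈ I, f i := sum_sdiff hHI
  have hsum_ge : #H * β ≤ ∑ i ∈ H, f i := by
    rw [← nsmul_eq_mul]
    exact card_nsmul_le_sum _ _ _ fun i hi => (mem_filter.1 hi).2.le
  have hHN : #H ≤ N := by
    by_contra! hlt
    have hne : H.Nonempty := card_pos.1 (by lia)
    have hsum_gt : #H * β < ∑ i ∈ H, f i := by
      rw [← nsmul_eq_mul, ← sum_const]
      exact sum_lt_sum_of_nonempty hne fun i hi => (mem_filter.1 hi).2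
    have hrest : 0 ≤ ∑ i ∈ I \ H, f i := sum_nonneg fun i hi => hf i (sdiff_subset hi)
    have hmul : (N : 𝕜) * β ≤ #H * β := by gcongr
    linarith
  obtain ⟨r, rfl⟩ := Nat.exists_eq_add_of_le hHN
  refine ⟨H, hHI, r, rfl, fun i hi => ?_, ?_⟩
  · obtain ⟨hiI, hiH⟩ := mem_sdiff.1 hi
    exact not_lt.1 fun hlt => hiH (mem_filter.2 ⟨hiI, hlt⟩)
  · push_cast at hI
    linarith

end Rounding

variable {m n : ℕ}

section Norms

lemma l1_nonneg (x : Fin n → ℝ) : 0 ≤ l1 x := sum_nonneg fun _ _ => abs_nonneg _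

lemma l2_nonneg (x : Fin n → ℝ) : 0 ≤ l2 x := Real.sqrt_nonneg _

lemma l2_sq (x : Fin n → ℝ) : l2 x ^ 2 = ∑ i, x i ^ 2 :=
  Real.sq_sqrt (sum_nonneg fun _ _ => sq_nonneg _)

lemma l2_sq_eq_dotProduct (x : Fin n → ℝ) : l2 x ^ 2 = x ⬝ᵥ x := by
  rw [l2_sq]
  exact sum_congr rfl fun i _ => sq (x i)

lemma l2_eq_norm (x : Fin n → ℝ) : l2 x = ‖WithLp.toLp 2 x‖ := by
  simp [l2, EuclideanSpace.norm_eq]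

lemma l2_add_le (x y : Fin n → ℝ) : l2 (x + y) ≤ l2 x + l2 y := by
  simpa only [l2_eq_norm, WithLp.toLp_add] using norm_add_le _ _

lemma l2_neg (x : Fin n → ℝ) : l2 (-x) = l2 x := by simp [l2]

lemma l2_le_l1 (x : Fin n → ℝ) : l2 x ≤ l1 x := by
  refine Real.sqrt_le_iff.2 ⟨l1_nonneg x, ?_⟩
  simpa only [l1, sq_abs] using
    sum_sq_le_sq_sum_of_nonneg (s := univ) (f := fun i => |x i|) fun i _ => abs_nonneg _

lemma dotProduct_le_l2_mul_l2 (x y : Fin n → ℝ) : x ⬝ᵥ y ≤ l2 x * l2 y :=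
  Real.sum_mul_le_sqrt_mul_sqrt _ _ _

end Norms

section Projections

variable (S : Finset (Fin n)) (x y : Fin n → ℝ)

lemma proj_sub : proj S (x - y) = proj S x - proj S y := by
  ext i; by_cases hi : i ∈ S <;> simp [proj, hi]

lemma proj_add_proj_compl : proj S x + proj Sᶜ x = x := by
  ext i; by_cases hi : i ∈ S <;> simp [proj, hi]

lemma l1_proj : l1 (proj S x) = ∑ i ∈ S, |x i| := by
  simp [l1, proj, apply_ite abs]

lemma l1_proj_add_l1_proj_compl : l1 (proj S x) + l1 (proj Sᶜ x) = l1 x := by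
  simp only [l1_proj]
  exact sum_add_sum_compl S _

lemma l2_proj_le_l2_proj {S T : Finset (Fin n)} (hST : S ⊆ T) (x : Fin n → ℝ) :
    l2 (proj S x) ≤ l2 (proj T x) := by
  simp only [l2, proj, ite_pow, zero_pow two_ne_zero, sum_ite_mem, univ_inter]
  exact Real.sqrt_le_sqrt (sum_le_sum_of_subset_of_nonneg hST fun _ _ _ => sq_nonneg _)

end Projections

section Sparsity

variable {k l : ℕ} {x y : Fin n → ℝ}

lemma IsSparse.of_forall_notMem {S : Finset (Fin n)} (hx : ∀ i ∉ S, x i = 0) (hS : #S ≤ k) :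
    IsSparse k x :=
  (card_le_card fun i hi => not_imp_comm.1 (hx i) ((mem_filter_univ i).1 hi)).trans hS

lemma isSparse_proj {S : Finset (Fin n)} (hS : #S ≤ k) (x : Fin n → ℝ) :
    IsSparse k (proj S x) :=
  .of_forall_notMem (fun _ hi => if_neg hi) hS

lemma IsSparse.add (hx : IsSparse k x) (hy : IsSparse l y) : IsSparse (k + l) (x + y) := by
  refine .of_forall_notMem (S := univ.filter (x · ≠ 0) ∪ univ.filter (y · ≠ 0)) (fun i hi => ?_)
    ((card_union_le _ _).trans (add_le_add hx hy))
  simp only [mem_union, mem_filter_univ, not_or, not_not] at hi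
  simp [hi]

lemma IsSparse.smul (a : ℝ) (hx : IsSparse k x) : IsSparse k (a • x) :=
  .of_forall_notMem (S := univ.filter (x · ≠ 0)) (fun i hi => by simp_all) hx

lemma IsSparse.mono (hkl : k ≤ l) (hx : IsSparse k x) : IsSparse l x := hx.trans hkl

lemma IsSparse.l2_sq_le {β : ℝ} (hx : IsSparse k x) (hβ : ∀ i, |x i| ≤ β) :
    l2 x ^ 2 ≤ k * β ^ 2 := by
  calc l2 x ^ 2 = ∑ i with x i ≠ 0, x i ^ 2 := by
        rw [l2_sq, sum_filter_of_ne fun i _ hi => by simpa using hi]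
    _ ≤ #{i | x i ≠ 0} * β ^ 2 := by
        rw [← nsmul_eq_mul]
        exact sum_le_card_nsmul _ _ _ fun i _ => sq_le_sq' (neg_le_of_abs_le (hβ i))
          (le_of_abs_le (hβ i))
    _ ≤ k * β ^ 2 := by
        gcongr
        exact hx

lemma l1_proj_le_sqrt_mul_l2 {S : Finset (Fin n)} (hS : #S ≤ k) (x : Fin n → ℝ) :
    l1 (proj S x) ≤ √k * l2 (proj S x) := by
  have hsq : l2 (proj S x) ^ 2 = ∑ i ∈ S, |x i| ^ 2 := by
    simp [l2_sq, proj, ite_pow]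
  refine le_of_sq_le_sq ?_ (mul_nonneg (Real.sqrt_nonneg _) (l2_nonneg _))
  calc l1 (proj S x) ^ 2 ≤ #S * ∑ i ∈ S, |x i| ^ 2 := by
        rw [l1_proj]
        exact sq_sum_le_card_mul_sum_sq
    _ ≤ k * ∑ i ∈ S, |x i| ^ 2 := by gcongr
    _ = (√k * l2 (proj S x)) ^ 2 := by rw [mul_pow, Real.sq_sqrt k.cast_nonneg, hsq]

lemma le_mul_sigma1_add {a b C : ℝ} (hC : 0 < C)
    (h : ∀ S : Finset (Fin n), #S ≤ k → a ≤ C * l1 (proj Sᶜ x) + b) :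
    a ≤ C * sigma1 k x + b := by
  suffices (a - b) / C ≤ sigma1 k x by
    rw [div_le_iff₀ hC] at this
    linarith
  refine le_csInf ⟨_, 0, by simp [IsSparse], rfl⟩ ?_
  rintro _ ⟨z, hz, rfl⟩
  set S : Finset (Fin n) := univ.filter (z · ≠ 0)
  have htail : proj Sᶜ (x - z) = proj Sᶜ x := by
    ext i; by_cases hi : z i = 0 <;> simp [proj, S, hi]
  have hle : l1 (proj Sᶜ x) ≤ l1 (x - z) := by
    linarith [l1_proj_add_l1_proj_compl S (x - z), l1_nonneg (proj S (x - z)), congrArg l1 htail]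
  rw [div_le_iff₀ hC]
  nlinarith [h S hz]

end Sparsity

section SparseRounding

lemma exists_isSparse_dotProduct_le (L : Fin n → ℝ) {w : Fin n → ℝ} {r : ℕ} {β : ℝ} (hβ : 0 ≤ β)
    (hw : ∀ i, |w i| ≤ β) (hw1 : l1 w ≤ r * β) :
    ∃ u : Fin n → ℝ, IsSparse r u ∧ (∀ i, w i = 0 → u i = 0) ∧ (∀ i, |u i| ≤ β) ∧
      L ⬝ᵥ u ≤ L ⬝ᵥ w := by
  let sgn : Fin n → ℝ := fun i => SignType.sign (w i)
  have hsgn (i) : |sgn i| ≤ 1 := by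
    rcases lt_trichotomy (w i) 0 with hi | hi | hi <;> simp [sgn, hi]
  obtain ⟨T, -, hTr, hT⟩ := exists_subset_sum_mul_le_sum univ (fun i => -(L i * (sgn i * β)))
    (w := fun i => |w i| / β) (s := r) (fun i _ => by positivity)
    (fun i _ => div_le_one_of_le₀ (hw i) hβ)
    (by rw [← sum_div]; exact div_le_of_le_mul₀ hβ r.cast_nonneg hw1)
  have hw_eq (i) : sgn i * β * (|w i| / β) = w i := by
    rw [mul_assoc, mul_div_cancel_of_imp' fun hβ0 => le_antisymm (hβ0 ▸ hw i) (abs_nonneg _)]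
    exact sign_mul_abs (w i)
  refine ⟨proj T fun i => sgn i * β, isSparse_proj hTr _, fun i hi => ?_, fun i => ?_, ?_⟩
  · simp [proj, sgn, hi]
  · by_cases hi : i ∈ T
    · simpa [proj, hi, abs_mul, abs_of_nonneg hβ] using mul_le_of_le_one_left hβ (hsgn i)
    · simpa [proj, hi] using hβ
  · have hLu : L ⬝ᵥ proj T (fun i => sgn i * β) = ∑ i ∈ T, L i * (sgn i * β) := by
      simp [dotProduct, proj]
    have hLw : L ⬝ᵥ w = ∑ i, L i * (sgn i * β) * (|w i| / β) :=
      sum_congr rfl fun i _ => by rw [mul_assoc, hw_eq]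
    rw [hLu, hLw]
    simpa only [neg_mul, sum_neg_distrib, neg_le_neg_iff] using hT

/-- `B` is `S` together with the entries of `h` off `S` exceeding the average
`‖h_{Sᶜ}‖₁ / N`. It is chosen before the functional, which will depend on `h_B`. -/
lemma exists_superset_forall_exists_isSparse_dotProduct_le (h : Fin n → ℝ) (S : Finset (Fin n))
    {N : ℕ} (hN : 0 < N) :
    ∃ B ⊇ S, ∃ r : ℕ, #B + r ≤ #S + N ∧ ∀ L : Fin n → ℝ, ∃ u : Fin n → ℝ,
      IsSparse r u ∧ (∀ i ∈ B, u i = 0) ∧ l2 u ^ 2 ≤ l1 (proj Sᶜ h) ^ 2 / N ∧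
        L ⬝ᵥ u ≤ L ⬝ᵥ proj Bᶜ h := by
  have hN' : (0 : ℝ) < N := by exact_mod_cast hN
  set β := l1 (proj Sᶜ h) / N with hβ_def
  have hβ : 0 ≤ β := div_nonneg (l1_nonneg _) hN'.le
  obtain ⟨H, -, r, hHr, hbound, hsum⟩ := exists_subset_card_add_eq_sum_sdiff_le Sᶜ
    (f := fun i => |h i|) (N := N) (fun _ _ => abs_nonneg _) hβ
    (by rw [← l1_proj, hβ_def, mul_div_cancel₀ _ hN'.ne'])
  have hcompl : Sᶜ \ H = (S ∪ H)ᶜ := by rw [compl_union, sdiff_eq_inter_compl]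
  rw [hcompl] at hbound hsum
  have hrN : (r : ℝ) ≤ N := by exact_mod_cast (by lia : r ≤ N)
  refine ⟨S ∪ H, subset_union_left, r, by have := card_union_le S H; lia, fun L => ?_⟩
  have htail (i) : |proj (S ∪ H)ᶜ h i| ≤ β := by
    by_cases hi : i ∈ (S ∪ H)ᶜ
    · simpa only [proj, if_pos hi] using hbound i hi
    · simpa only [proj, if_neg hi, abs_zero] using hβ
  obtain ⟨u, husp, husupp, hubound, hLu⟩ :=
    exists_isSparse_dotProduct_le L hβ htail (by rwa [l1_proj])
  refine ⟨u, husp, fun i hi => husupp i (if_neg (notMem_compl.2 hi)), ?_, hLu⟩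
  calc l2 u ^ 2 ≤ r * β ^ 2 := husp.l2_sq_le hubound
    _ ≤ N * β ^ 2 := by gcongr
    _ = l1 (proj Sᶜ h) ^ 2 / N := by rw [hβ_def]; field_simp

end SparseRounding

section NullSpaceProperty

variable {A : Matrix (Fin m) (Fin n) ℝ} {δ : ℝ}

lemma l2_sq_smul_add_smul (a b : ℝ) (x y : Fin n → ℝ) :
    l2 (a • x + b • y) ^ 2 = a ^ 2 * l2 x ^ 2 + 2 * a * b * (x ⬝ᵥ y) + b ^ 2 * l2 y ^ 2 := by
  simp only [l2_sq_eq_dotProduct, add_dotProduct, dotProduct_add, smul_dotProduct, dotProduct_smul,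
    smul_eq_mul, dotProduct_comm y x]
  ring

lemma RIP.l2_mulVec_le {s : ℕ} (hA : RIP A s δ) (hδ : 0 ≤ δ) {v : Fin n → ℝ}
    (hv : IsSparse s v) : l2 (A *ᵥ v) ≤ √(1 + δ) * l2 v := by
  refine le_of_sq_le_sq ?_ (mul_nonneg (Real.sqrt_nonneg _) (l2_nonneg v))
  rw [mul_pow, Real.sq_sqrt (by linarith)]
  exact (hA v hv).2

lemma RIP.mul_l2_sq_le_mul_dotProduct_add {p q : ℕ} (hA : RIP A (p + q) δ) (ν : ℝ)
    {v u : Fin n → ℝ} (hv : IsSparse p v) (hu : IsSparse q u) (hvu : v ⬝ᵥ u = 0) :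
    (ν * (1 - ν) - δ * (1 / 2 - ν * (1 - ν))) * l2 v ^ 2 ≤
      ν * (1 - ν) * (A *ᵥ v ⬝ᵥ A *ᵥ (v + u)) + δ * (ν ^ 2 / 2) * l2 u ^ 2 := by
  have hsparse (a b : ℝ) : IsSparse (p + q) (a • v + b • u) := (hv.smul a).add (hu.smul b)
  have hlower := (hA _ (hsparse 1 ν)).1
  have hupper := (hA _ (hsparse (1 / 2 - ν) (-(ν / 2)))).2
  simp only [mulVec_add, mulVec_smul, l2_sq_smul_add_smul, hvu] at hlower hupper
  rw [mulVec_add, dotProduct_add, ← l2_sq_eq_dotProduct]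
  linear_combination hlower / 4 + hupper

lemma RIP.exists_head_sq_le {k N : ℕ} (hN : 0 < N) (hA : RIP A (k + N) δ) (hδ : 0 ≤ δ) {ν : ℝ}
    (hν : 0 ≤ ν * (1 - ν)) (h : Fin n → ℝ) {S : Finset (Fin n)} (hS : #S ≤ k) :
    ∃ X : ℝ, l2 (proj S h) ≤ X ∧
      (ν * (1 - ν) - δ * (1 / 2 - ν * (1 - ν))) * X ^ 2 ≤
        ν * (1 - ν) * (√(1 + δ) * X * l2 (A *ᵥ h)) +
          δ * (ν ^ 2 / 2) * (l1 (proj Sᶜ h) ^ 2 / N) := by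
  obtain ⟨B, hSB, r, hBr, hround⟩ := exists_superset_forall_exists_isSparse_dotProduct_le h S hN
  set v := proj B h
  obtain ⟨u, hu, huB, hul2, hLu⟩ := hround ((A *ᵥ v) ᵥ* A)
  rw [← dotProduct_mulVec, ← dotProduct_mulVec] at hLu
  obtain ⟨p, hp⟩ := Nat.exists_eq_add_of_le' (by lia : r ≤ k + N)
  rw [hp] at hA
  have hv : IsSparse p v := isSparse_proj (by lia) h
  have hvu : v ⬝ᵥ u = 0 := sum_eq_zero fun i _ => by
    by_cases hi : i ∈ B <;> simp [v, proj, hi, huB]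
  have hinner : A *ᵥ v ⬝ᵥ A *ᵥ (v + u) ≤ √(1 + δ) * l2 v * l2 (A *ᵥ h) :=
    calc A *ᵥ v ⬝ᵥ A *ᵥ (v + u)
        ≤ A *ᵥ v ⬝ᵥ A *ᵥ (v + proj Bᶜ h) := by
          simp only [mulVec_add, dotProduct_add]
          gcongr
      _ = A *ᵥ v ⬝ᵥ A *ᵥ h := by rw [proj_add_proj_compl]
      _ ≤ l2 (A *ᵥ v) * l2 (A *ᵥ h) := dotProduct_le_l2_mul_l2 _ _
      _ ≤ √(1 + δ) * l2 v * l2 (A *ᵥ h) :=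
          mul_le_mul_of_nonneg_right (hA.l2_mulVec_le hδ (hv.mono (by lia))) (l2_nonneg _)
  refine ⟨l2 v, l2_proj_le_l2_proj hSB h, ?_⟩
  calc _ ≤ ν * (1 - ν) * (A *ᵥ v ⬝ᵥ A *ᵥ (v + u)) + δ * (ν ^ 2 / 2) * l2 u ^ 2 :=
        hA.mul_l2_sq_le_mul_dotProduct_add ν hv hu hvu
    _ ≤ _ := by gcongr

lemma le_add_of_sq_le_sq_add_mul {X p q : ℝ} (hp : 0 ≤ p) (hq : 0 ≤ q)
    (h : X ^ 2 ≤ p ^ 2 + q * X) : X ≤ p + q := by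
  by_contra! hlt
  nlinarith

lemma RIP.rnsp {k N : ℕ} (hk : 0 < k) (hN : 0 < N) (hA : RIP A (k + N) δ) (hδ : 0 ≤ δ) {ν a : ℝ}
    (hν : 0 ≤ ν * (1 - ν)) (ha : a = ν * (1 - ν) - δ * (1 / 2 - ν * (1 - ν))) (ha0 : 0 < a) :
    RNSP A k √(δ * (ν ^ 2 * k / (2 * N)) / a) (√k * (ν * (1 - ν) * √(1 + δ) / a)) := by
  intro h S hS
  have hk' : (0 : ℝ) < √k := Real.sqrt_pos.2 (by exact_mod_cast hk)
  obtain ⟨X, hSX, hX⟩ := hA.exists_head_sq_le hN hδ hν h hS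
  rw [← ha] at hX
  set r := √(δ * (ν ^ 2 * k / (2 * N)) / a)
  have hr_sq : r ^ 2 = δ * (ν ^ 2 * k / (2 * N)) / a := Real.sq_sqrt (by positivity)
  have hquad : X ^ 2 ≤ (r / √k * l1 (proj Sᶜ h)) ^ 2 +
      ν * (1 - ν) * √(1 + δ) / a * l2 (A *ᵥ h) * X := by
    refine le_of_mul_le_mul_left (hX.trans_eq ?_) ha0
    rw [mul_pow, div_pow, hr_sq, Real.sq_sqrt k.cast_nonneg]
    have : (k : ℝ) ≠ 0 := by exact_mod_cast hk.ne'
    field_simp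
    ring
  have hXle := le_add_of_sq_le_sq_add_mul
    (mul_nonneg (div_nonneg (Real.sqrt_nonneg _) hk'.le) (l1_nonneg _))
    (mul_nonneg (by positivity) (l2_nonneg _)) hquad
  rw [mul_div_cancel_left₀ _ hk'.ne']
  exact hSX.trans hXle

lemma RNSP.l1_proj_le {k : ℕ} (hk : 0 < k) {r τ : ℝ} (hA : RNSP A k r τ) (h : Fin n → ℝ)
    {S : Finset (Fin n)} (hS : #S ≤ k) :
    l1 (proj S h) ≤ r * l1 (proj Sᶜ h) + τ * l2 (A *ᵥ h) := by
  have hk' : (0 : ℝ) < √k := Real.sqrt_pos.2 (by exact_mod_cast hk)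
  calc l1 (proj S h) ≤ √k * l2 (proj S h) := l1_proj_le_sqrt_mul_l2 hS h
    _ ≤ √k * (r / √k * l1 (proj Sᶜ h) + τ / √k * l2 (A *ᵥ h)) :=
        mul_le_mul_of_nonneg_left (hA h S hS) hk'.le
    _ = r * l1 (proj Sᶜ h) + τ * l2 (A *ᵥ h) := by field_simp

end NullSpaceProperty

section DescentCone

/-- The objective `F` only descends from `x` in directions `z - x` whose `ℓ₁`-mass off any index
set `S` is controlled, with weight `ρ`, by the mass on `S` and by the tail of `x` itself. The
`ℓ₁`-norm has this property with `ρ = 1`. -/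
def DescentConeBound (F : (Fin n → ℝ) → ℝ) (ρ : ℝ) : Prop :=
  ∀ ⦃x z : Fin n → ℝ⦄, F z ≤ F x → ∀ S : Finset (Fin n),
    ρ * l1 (proj Sᶜ (z - x)) ≤ l1 (proj S (z - x)) + 2 * l1 (proj Sᶜ x)

variable {F Φ : (Fin n → ℝ) → ℝ} {μ ρ ρ' : ℝ}

lemma DescentConeBound.mono (hρ : ρ' ≤ ρ) (hF : DescentConeBound F ρ) : DescentConeBound F ρ' :=
  fun _ _ hle S => (mul_le_mul_of_nonneg_right hρ (l1_nonneg _)).trans (hF hle S)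

lemma l1_proj_compl_sub_le (x z : Fin n → ℝ) (S : Finset (Fin n)) :
    l1 (proj Sᶜ (z - x)) ≤ l1 (proj S (z - x)) + 2 * l1 (proj Sᶜ x) + (l1 z - l1 x) := by
  have hon : l1 (proj S x) ≤ l1 (proj S (z - x)) + l1 (proj S z) := by
    simp only [l1_proj, ← sum_add_distrib, Pi.sub_apply, abs_sub_comm (z _)]
    exact sum_le_sum fun i _ => by simpa using abs_sub_le (x i) (z i) 0
  have hoff : l1 (proj Sᶜ (z - x)) ≤ l1 (proj Sᶜ z) + l1 (proj Sᶜ x) := by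
    simp only [l1_proj, ← sum_add_distrib]
    exact sum_le_sum fun i _ => abs_sub _ _
  linarith [l1_proj_add_l1_proj_compl S x, l1_proj_add_l1_proj_compl S z]

lemma DescentConeBound.l1_add_of_lipschitz (hΦ : ∀ x z, Φ x ≤ Φ z + l1 (z - x)) (hμ0 : 0 ≤ μ)
    (hμ1 : μ ≤ 1) : DescentConeBound (fun z => (1 - μ) * l1 z + μ * Φ z) (1 - 2 * μ) := by
  intro x z hle S
  have hl1 := mul_le_mul_of_nonneg_left (l1_proj_compl_sub_le x z S) (sub_nonneg.2 hμ1)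
  have hlip := mul_le_mul_of_nonneg_left (hΦ x z) hμ0
  rw [← l1_proj_add_l1_proj_compl S (z - x)] at hlip
  linarith [mul_nonneg hμ0 (l1_nonneg (proj Sᶜ x))]

variable {g : ℕ} {G : Fin g → Finset (Fin n)}

lemma IsPartition.sum_l1_proj (hG : IsPartition G) (x : Fin n → ℝ) :
    ∑ i, l1 (proj (G i) x) = l1 x := by
  obtain ⟨-, hdisj, hcover⟩ := hG
  have hunion : univ.biUnion G = univ := eq_univ_of_forall fun j => by simpa using hcover j
  simp only [l1_proj]
  rw [← sum_biUnion fun i _ j _ hij => hdisj i j hij, hunion, l1]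

lemma IsPartition.sum_l2_proj_le (hG : IsPartition G) (x z : Fin n → ℝ) :
    ∑ i, l2 (proj (G i) x) ≤ ∑ i, l2 (proj (G i) z) + l1 (z - x) := by
  rw [← hG.sum_l1_proj, ← sum_add_distrib]
  refine sum_le_sum fun i _ => ?_
  calc l2 (proj (G i) x) = l2 (proj (G i) z + -proj (G i) (z - x)) := by
        rw [proj_sub]; congr 1; abel
    _ ≤ l2 (proj (G i) z) + l2 (proj (G i) (z - x)) := by
        simpa only [l2_neg] using l2_add_le (proj (G i) z) (-proj (G i) (z - x))
    _ ≤ l2 (proj (G i) z) + l1 (proj (G i) (z - x)) := by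
        gcongr
        exact l2_le_l1 _

lemma IsPartition.descentConeBound_sglNorm (hG : IsPartition G) (hμ0 : 0 ≤ μ) (hμ1 : μ ≤ 1) :
    DescentConeBound (sglNorm G μ) (1 - 2 * μ) := by
  have hsgl : sglNorm G μ = fun z => (1 - μ) * l1 z + μ * ∑ i, l2 (proj (G i) z) := by
    ext z
    rw [sglNorm, sum_add_distrib, ← mul_sum, ← mul_sum, hG.sum_l1_proj]
  rw [hsgl]
  exact .l1_add_of_lipschitz hG.sum_l2_proj_le hμ0 hμ1

lemma IsPartition.descentConeBound_sglNorm_of_card (hG : IsPartition G) {γ : ℝ} (hμ : 0 ≤ μ)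
    (hμ1 : μ < 1) (hγ : γ = μ * √g / (1 - μ)) :
    DescentConeBound (sglNorm G μ) ((1 - γ) / (1 + γ)) := by
  have hγ0 : 0 ≤ γ := hγ ▸ div_nonneg (by positivity) (by linarith)
  rcases g.eq_zero_or_pos with rfl | hg
  · have hn (y : Fin n → ℝ) : l1 y = 0 := by rw [← hG.sum_l1_proj]; simp
    intro x z _ S
    simp [hn]
  refine (hG.descentConeBound_sglNorm hμ hμ1.le).mono ?_
  have hμγ : μ ≤ γ * (1 - μ) := by
    have hg1 : (1 : ℝ) ≤ √g := Real.one_le_sqrt.2 (by exact_mod_cast hg)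
    rw [hγ, div_mul_cancel₀ _ (by linarith)]
    exact le_mul_of_one_le_right hμ hg1
  rw [div_le_iff₀ (by linarith)]
  linarith

end DescentCone

section Recovery

variable {A : Matrix (Fin m) (Fin n) ℝ} {F : (Fin n → ℝ) → ℝ} {k : ℕ} {r τ ρ : ℝ}

lemma RNSP.mul_l1_sub_le (hk : 0 < k) (hA : RNSP A k r τ) (hF : DescentConeBound F ρ) (hr : 0 ≤ r)
    (hrρ : r ≤ ρ) {x z : Fin n → ℝ} (hzx : F z ≤ F x) {S : Finset (Fin n)} (hS : #S ≤ k) :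
    (ρ - r) * l1 (z - x) ≤
      2 * (1 + r) * l1 (proj Sᶜ x) + (1 + ρ) * τ * l2 (A *ᵥ (z - x)) := by
  have hnsp := mul_le_mul_of_nonneg_left (hA.l1_proj_le hk (z - x) hS) (by linarith : 0 ≤ 1 + ρ)
  have hcone := mul_le_mul_of_nonneg_left (hF hzx S) (by linarith : 0 ≤ 1 + r)
  rw [← l1_proj_add_l1_proj_compl S (z - x)]
  linarith

lemma l2_mulVec_sub_le {x z : Fin n → ℝ} {y η : Fin m → ℝ} {ε : ℝ} (hη : l2 η ≤ ε)
    (hy : y = A *ᵥ x + η) (hz : l2 (A *ᵥ z - y) ≤ ε) : l2 (A *ᵥ (z - x)) ≤ 2 * ε := by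
  have hsplit : A *ᵥ (z - x) = (A *ᵥ z - y) + η := by rw [mulVec_sub, hy]; abel
  rw [hsplit]
  linarith [l2_add_le (A *ᵥ z - y) η]

lemma RNSP.l1_sub_le_sigma1 (hk : 0 < k) (hA : RNSP A k r τ) (hF : DescentConeBound F ρ)
    (hr : 0 ≤ r) (hrρ : r < ρ) (hτ : 0 ≤ τ) {x xh : Fin n → ℝ} {y η : Fin m → ℝ} {ε : ℝ}
    (hη : l2 η ≤ ε) (hy : y = A *ᵥ x + η) (hfeas : l2 (A *ᵥ xh - y) ≤ ε)
    (hmin : ∀ z, l2 (A *ᵥ z - y) ≤ ε → F xh ≤ F z) :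
    l1 (xh - x) ≤ 2 * (1 + r) / (ρ - r) * sigma1 k x + 2 * (1 + ρ) * τ / (ρ - r) * ε := by
  have hgap : 0 < ρ - r := sub_pos.2 hrρ
  have hx : l2 (A *ᵥ x - y) ≤ ε := by rwa [hy, sub_add_cancel_left, l2_neg]
  refine le_mul_sigma1_add (by positivity) fun S hS => ?_
  have hres := mul_le_mul_of_nonneg_left (l2_mulVec_sub_le hη hy hfeas)
    (mul_nonneg (by linarith) hτ : 0 ≤ (1 + ρ) * τ)
  have herr := hA.mul_l1_sub_le hk hF hr hrρ.le (hmin x hx) hS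
  refine le_of_mul_le_mul_left (herr.trans ?_) hgap
  calc _ ≤ 2 * (1 + r) * l1 (proj Sᶜ x) + (1 + ρ) * τ * (2 * ε) := by gcongr
    _ = _ := by field_simp

end Recovery

lemma sqrt_mul_sub_one_sub_mem_Ioo {t : ℝ} (ht : 1 < t) :
    √(t * (t - 1)) - (t - 1) ∈ Set.Ioo (0 : ℝ) 1 := by
  constructor
  · exact sub_pos.2 (Real.lt_sqrt_of_sq_lt (by nlinarith))
  · have : √(t * (t - 1)) < t := (Real.sqrt_lt' (by linarith)).2 (by nlinarith)
    linarith

lemma one_sub_div_one_add_pos_of_mul_sqrt_lt {g : ℕ} {μ γ : ℝ} (hμ : 0 ≤ μ) (hμg : μ * √g < 1 - μ)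
    (hγ : γ = μ * √g / (1 - μ)) : 0 < (1 - γ) / (1 + γ) := by
  have hμ1 : 0 < 1 - μ := lt_of_le_of_lt (by positivity) hμg
  have hγ0 : 0 ≤ γ := hγ ▸ by positivity
  have hγ1 : γ < 1 := by rwa [hγ, div_lt_one hμ1]
  exact div_pos (by linarith) (by linarith)

/-- `ν = √(t(t - 1)) - (t - 1)` maximises the threshold for `δ` when `ρ = 1`. -/
theorem stmt16_general {k tk : ℕ} (hk : 0 < k) {t : ℝ} (ht : 1 < t) (htk : (tk : ℝ) = t * k)
    {ν θ₁ θ₂ θ₃ : ℝ} (hν : ν ∈ Set.Ioo (0 : ℝ) 1) (hθ₁ : θ₁ = ν * (1 - ν)) (hθ₂ : θ₂ = 1 / 2 - θ₁)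
    (hθ₃ : θ₃ = ν ^ 2 / (2 * (t - 1))) {F : (Fin n → ℝ) → ℝ} {ρ : ℝ} (hρ : 0 < ρ)
    (hF : DescentConeBound F ρ) {A : Matrix (Fin m) (Fin n) ℝ} {δ : ℝ} (hδ0 : 0 ≤ δ)
    (hRIP : RIP A tk δ) (hδ : δ < ρ ^ 2 * θ₁ / (θ₃ + ρ ^ 2 * θ₂)) :
    ∃ C₀ C₁ : ℝ, ∀ (x : Fin n → ℝ) (ε : ℝ) (η : Fin m → ℝ), l2 η ≤ ε →
      ∀ y : Fin m → ℝ, y = A *ᵥ x + η → ∀ xh : Fin n → ℝ,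
        (l2 (A *ᵥ xh - y) ≤ ε ∧ ∀ z, l2 (A *ᵥ z - y) ≤ ε → F xh ≤ F z) →
        l1 (xh - x) ≤ C₀ * sigma1 k x + C₁ * ε := by
  obtain ⟨hν0, hν1⟩ := hν
  have hk' : (0 : ℝ) < k := by exact_mod_cast hk
  have ht' : 0 < t - 1 := sub_pos.2 ht
  have hktk : k < tk := by exact_mod_cast (by rw [htk]; nlinarith : (k : ℝ) < tk)
  obtain ⟨N, rfl⟩ := Nat.exists_eq_add_of_lt hktk
  rw [add_assoc] at hRIP htk
  have hN : ((N + 1 : ℕ) : ℝ) = (t - 1) * k := by push_cast at htk ⊢; linarith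
  have hθ₁0 : 0 < θ₁ := hθ₁ ▸ mul_pos hν0 (sub_pos.2 hν1)
  have hθ₂0 : 0 < θ₂ := by nlinarith [sq_nonneg (ν - 1 / 2)]
  have hθ₃0 : 0 < θ₃ := hθ₃ ▸ by positivity
  rw [lt_div_iff₀ (by positivity)] at hδ
  set a := θ₁ - δ * θ₂ with ha
  have hδa : δ * θ₃ < ρ ^ 2 * a := by rw [ha]; linarith
  have ha0 : 0 < a := pos_of_mul_pos_right ((mul_nonneg hδ0 hθ₃0.le).trans_lt hδa) (sq_nonneg ρ)
  have hrnsp := hRIP.rnsp hk N.succ_pos hδ0 (hθ₁ ▸ hθ₁0.le) (by rw [ha, hθ₂, hθ₁]) ha0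
  have hθ₃_eq : ν ^ 2 * k / (2 * (N + 1 : ℕ)) = θ₃ := by rw [hN, hθ₃]; field_simp
  rw [hθ₃_eq, ← hθ₁] at hrnsp
  have hr : √(δ * θ₃ / a) < ρ := by rwa [Real.sqrt_lt' hρ, div_lt_iff₀ ha0]
  exact ⟨_, _, fun x ε η hη y hy xh ⟨hfeas, hmin⟩ =>
    hrnsp.l1_sub_le_sigma1 hk hF (Real.sqrt_nonneg _) hr (by positivity) hη hy hfeas hmin⟩

/-- Robust sparse recovery for SGL under a bound on `δ` derived from `μ`. -/
theorem stmt16 (m n g k tk : ℕ) (hk : 0 < k) (t : ℝ) (ht : 4 / 3 ≤ t) (htk : 0 < tk)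
    (htkeq : (tk : ℝ) = t * k)
    (ν θ₁ θ₂ θ₃ : ℝ)
    (hν : ν = Real.sqrt (t * (t - 1)) - (t - 1))
    (hθ₁ : θ₁ = ν * (1 - ν)) (hθ₂ : θ₂ = 0.5 - θ₁)
    (hθ₃ : θ₃ = ν ^ 2 / (2 * (t - 1)))
    (G : Fin g → Finset (Fin n)) (hG : IsPartition G)
    (μ : ℝ) (hμ : 0 < μ) (hμg : μ * Real.sqrt g < 1 - μ)
    (γ ρbar : ℝ) (hγ : γ = μ * Real.sqrt g / (1 - μ)) (hρbar : ρbar = (1 - γ) / (1 + γ))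
    (A : Matrix (Fin m) (Fin n) ℝ) (δ : ℝ) (hδ0 : 0 ≤ δ)
    (hRIP : RIP A tk δ)
    (hδ : δ < ρbar ^ 2 * θ₁ / (θ₃ + ρbar ^ 2 * θ₂)) :
    ∃ C₀ C₁ : ℝ, ∀ x : Fin n → ℝ, ∀ ε : ℝ, 0 ≤ ε → ∀ η : Fin m → ℝ, l2 η ≤ ε →
      ∀ y : Fin m → ℝ, y = A.mulVec x + η →
      ∀ xh : Fin n → ℝ,
        (l2 (A.mulVec xh - y) ≤ ε ∧
          ∀ z : Fin n → ℝ, l2 (A.mulVec z - y) ≤ ε → sglNorm G μ xh ≤ sglNorm G μ z) →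
        l1 (xh - x) ≤ C₀ * sigma1 k x + C₁ * ε := by
  have ht1 : 1 < t := by linarith
  have hμ1 : μ < 1 := by linarith [mul_nonneg hμ.le (Real.sqrt_nonneg g)]
  obtain ⟨C₀, C₁, hrecover⟩ := stmt16_general hk ht1 htkeq
    (hν ▸ sqrt_mul_sub_one_sub_mem_Ioo ht1) hθ₁ (by rw [hθ₂]; norm_num) hθ₃
    (hρbar ▸ one_sub_div_one_add_pos_of_mul_sqrt_lt hμ.le hμg hγ)
    (hρbar ▸ hG.descentConeBound_sglNorm_of_card hμ.le hμ1 hγ) hδ0 hRIP hδ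
  exact ⟨C₀, C₁, fun x ε _ => hrecover x ε⟩
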